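/- arXiv:math/0604521 — 2 statements merged into one kernel-verified Lean document; each statement's English description precedes it below -/
import Mathlib

section
/- If A is an n×n nonsingular integer matrix (n ≥ 1), then lim_{N→∞} (1/N)·log D(A^N) = log ρ(A), where ρ(A) is the spectral radius of A. Equivalently, D(A^N)^{1/N} → ρ(A) as N → ∞. (The algebraic entropy of the monomial map associated with A equals the logarithm of the spectral radius of A.) -/
open Matrix Finset Filter

/-- `D(M) = Σ_j max(0, max_i (−m_{ij})) + max(0, max_i Σ_j m_{ij})`,
the degree of the projective monomial map associated to the integer matrix `M`. -/
def Dmat {n : ℕ} (M : Matrix (Fin n) (Fin n) ℤ) : ℤ :=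
  (∑ j : Fin n, Finset.univ.fold max 0 (fun i : Fin n => -M i j)) +
    Finset.univ.fold max 0 (fun i : Fin n => ∑ j : Fin n, M i j)

/-- The spectral radius of an integer matrix: the maximum of `|λ|` over the complex
roots `λ` (with multiplicity) of its characteristic polynomial. -/
noncomputable def specRad {n : ℕ} (A : Matrix (Fin n) (Fin n) ℤ) : ℝ :=
  Multiset.fold max 0 (((A.map (Int.cast : ℤ → ℂ)).charpoly.roots).map (fun z : ℂ => ‖z‖))

/-!
`D(M)` and the `ℓ^∞` operator norm `‖M‖` (the largest `ℓ¹` norm of a row) bound each other up to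
constants depending only on the size of `M`, so `D(A^N)` and `‖A^N‖` have the same exponential
growth rate, and Gelfand's formula identifies that rate with the spectral radius. To pass to
logarithms one needs the limit to be nonzero: if no power of `A` vanishes, the integers `D(A^N)` are
all at least `1`, and hence so is the spectral radius.
-/

open Asymptotics Topology

attribute [local instance] Matrix.linftyOpSeminormedAddCommGroup Matrix.linftyOpNormedRing
  Matrix.linftyOpNormedAlgebra

section General

lemma multisetFold_max_le_iff {α : Type*} [LinearOrder α] {s : Multiset α} {b c : α} :
    s.fold max b ≤ c ↔ b ≤ c ∧ ∀ x ∈ s, x ≤ c := by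
  induction s using Multiset.induction with
  | empty => simp
  | cons a s ih =>
    rw [Multiset.fold_cons_left, max_le_iff, ih, Multiset.forall_mem_cons, and_left_comm]

lemma tendsto_const_rpow_one_div_nat {c : ℝ} (hc : c ≠ 0) :
    Tendsto (fun N : ℕ => c ^ (1 / N : ℝ)) atTop (𝓝 1) := by
  simpa only [Real.rpow_zero] using
    tendsto_const_nhds.rpow tendsto_one_div_atTop_nhds_zero_nat (Or.inl hc)

lemma tendsto_rpow_one_div_nat_of_isTheta {f g : ℕ → ℝ} {l : ℝ} (hf : ∀ N, 0 ≤ f N)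
    (hg : ∀ N, 0 ≤ g N) (hfg : f =Θ[atTop] g)
    (h : Tendsto (fun N : ℕ => g N ^ (1 / N : ℝ)) atTop (𝓝 l)) :
    Tendsto (fun N : ℕ => f N ^ (1 / N : ℝ)) atTop (𝓝 l) := by
  obtain ⟨b, hb, hfb⟩ := hfg.isBigO.exists_pos
  obtain ⟨a, ha, hga⟩ := hfg.isBigO_symm.exists_pos
  have rescaled (c : ℝ) (hc : 0 < c) :
      Tendsto (fun N : ℕ => (c * g N) ^ (1 / N : ℝ)) atTop (𝓝 l) := by
    simpa only [Real.mul_rpow hc.le (hg _), one_mul] using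
      (tendsto_const_rpow_one_div_nat hc.ne').mul h
  refine tendsto_of_tendsto_of_tendsto_of_le_of_le'
    (rescaled a⁻¹ (inv_pos.2 ha)) (rescaled b hb) ?_ ?_
  · filter_upwards [hga.bound] with N hN
    rw [Real.norm_of_nonneg (hf N), Real.norm_of_nonneg (hg N)] at hN
    have := hg N
    gcongr
    rwa [inv_mul_le_iff₀ ha]
  · filter_upwards [hfb.bound] with N hN
    rw [Real.norm_of_nonneg (hf N), Real.norm_of_nonneg (hg N)] at hN
    have := hf N
    gcongr

variable {m n α β : Type*} [Fintype m] [Fintype n]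

lemma linfty_opNorm_le_iff [SeminormedAddCommGroup α] {M : Matrix m n α} {r : ℝ} (hr : 0 ≤ r) :
    ‖M‖ ≤ r ↔ ∀ i, ∑ j, ‖M i j‖ ≤ r := by
  lift r to NNReal using hr
  rw [linfty_opNorm_def, NNReal.coe_le_coe, Finset.sup_le_iff]
  simp only [mem_univ, true_imp_iff, ← NNReal.coe_le_coe, NNReal.coe_sum, coe_nnnorm]

lemma row_sum_norm_le_linfty_opNorm [SeminormedAddCommGroup α] (M : Matrix m n α) (i : m) :
    ∑ j, ‖M i j‖ ≤ ‖M‖ :=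
  (linfty_opNorm_le_iff (norm_nonneg M)).1 le_rfl i

lemma linfty_opNorm_map_eq [SeminormedAddCommGroup α] [SeminormedAddCommGroup β] (M : Matrix m n α)
    {f : α → β} (hf : ∀ a, ‖f a‖ = ‖a‖) : ‖M.map f‖ = ‖M‖ := by
  have nnnorm_f (a : α) : ‖f a‖₊ = ‖a‖₊ := NNReal.eq (hf a)
  simp only [linfty_opNorm_def, map_apply, nnnorm_f]

lemma not_isNilpotent_of_det_ne_zero {R : Type*} [CommRing R] [IsReduced R] [DecidableEq n]
    [Nonempty n] {A : Matrix n n R} (hA : A.det ≠ 0) : ¬IsNilpotent A := by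
  rintro ⟨k, hk⟩
  refine hA (eq_zero_of_pow_eq_zero (n := k) ?_)
  rw [← det_pow, hk, det_zero]

end General

section IntegerMatrix

variable {n : ℕ}

lemma Dmat_nonneg (M : Matrix (Fin n) (Fin n) ℤ) : 0 ≤ Dmat M :=
  add_nonneg (sum_nonneg fun _ _ => (le_fold_max _).2 (Or.inl le_rfl))
    ((le_fold_max _).2 (Or.inl le_rfl))

lemma row_sum_abs_le_two_mul_Dmat (M : Matrix (Fin n) (Fin n) ℤ) (i : Fin n) :
    ∑ j, |M i j| ≤ 2 * Dmat M := by
  set colMax : Fin n → ℤ := fun j => univ.fold max 0 fun k => -M k j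
  set rowMax : ℤ := univ.fold max 0 fun k => ∑ j, M k j
  have colMax_nonneg (j : Fin n) : 0 ≤ colMax j := (le_fold_max _).2 (Or.inl le_rfl)
  have neg_le_colMax (j : Fin n) : -M i j ≤ colMax j :=
    (le_fold_max _).2 (Or.inr ⟨i, mem_univ i, le_rfl⟩)
  have rowMax_nonneg : 0 ≤ rowMax := (le_fold_max _).2 (Or.inl le_rfl)
  have row_sum_le : ∑ j, M i j ≤ rowMax := (le_fold_max _).2 (Or.inr ⟨i, mem_univ i, le_rfl⟩)
  have abs_le_add (j : Fin n) : |M i j| ≤ M i j + 2 * colMax j :=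
    abs_le.2 ⟨by linarith [neg_le_colMax j], by linarith [colMax_nonneg j]⟩
  calc ∑ j, |M i j| ≤ ∑ j, (M i j + 2 * colMax j) := sum_le_sum fun j _ => abs_le_add j
    _ = ∑ j, M i j + 2 * ∑ j, colMax j := by rw [sum_add_distrib, ← mul_sum]
    _ ≤ 2 * (∑ j, colMax j + rowMax) := by linarith

lemma Dmat_le_of_forall_row_sum_abs_le {M : Matrix (Fin n) (Fin n) ℤ} {c : ℤ} (hc : 0 ≤ c)
    (h : ∀ i, ∑ j, |M i j| ≤ c) : Dmat M ≤ (n + 1) * c := by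
  have abs_entry_le (i j : Fin n) : |M i j| ≤ c :=
    (single_le_sum (fun k _ => abs_nonneg (M i k)) (mem_univ j)).trans (h i)
  calc Dmat M ≤ ∑ _j : Fin n, c + c := by
        refine add_le_add (sum_le_sum fun j _ => ?_) ?_
        · exact (fold_max_le _).2 ⟨hc, fun i _ => (neg_le_abs _).trans (abs_entry_le i j)⟩
        · exact (fold_max_le _).2
            ⟨hc, fun i _ => (sum_le_sum fun j _ => le_abs_self (M i j)).trans (h i)⟩
    _ = (n + 1) * c := by simp [add_mul]

lemma norm_le_two_mul_Dmat (M : Matrix (Fin n) (Fin n) ℤ) : ‖M‖ ≤ 2 * Dmat M := by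
  have hD : (0 : ℝ) ≤ Dmat M := mod_cast Dmat_nonneg M
  refine (linfty_opNorm_le_iff (by positivity)).2 fun i => ?_
  simp only [Int.norm_eq_abs]
  exact_mod_cast row_sum_abs_le_two_mul_Dmat M i

lemma Dmat_le_mul_norm (M : Matrix (Fin n) (Fin n) ℤ) : (Dmat M : ℝ) ≤ (n + 1) * ‖M‖ := by
  have row_sum_le_floor (i : Fin n) : ∑ j, |M i j| ≤ ⌊‖M‖⌋ := by
    rw [Int.le_floor]
    push_cast
    simpa only [Int.norm_eq_abs] using row_sum_norm_le_linfty_opNorm M i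
  calc (Dmat M : ℝ) ≤ (n + 1) * ⌊‖M‖⌋ := mod_cast
        Dmat_le_of_forall_row_sum_abs_le (Int.floor_nonneg.2 (norm_nonneg M)) row_sum_le_floor
    _ ≤ (n + 1) * ‖M‖ := by gcongr; exact Int.floor_le _

lemma Dmat_isTheta_norm {ι : Type*} (l : Filter ι) (M : ι → Matrix (Fin n) (Fin n) ℤ) :
    (fun x => (Dmat (M x) : ℝ)) =Θ[l] fun x => ‖M x‖ := by
  have norm_Dmat (x : ι) : ‖(Dmat (M x) : ℝ)‖ = Dmat (M x) :=
    Real.norm_of_nonneg (mod_cast Dmat_nonneg (M x))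
  refine ⟨.of_bound (n + 1) (.of_forall fun x => ?_), .of_bound 2 (.of_forall fun x => ?_)⟩
  · simpa only [norm_Dmat, norm_norm] using Dmat_le_mul_norm (M x)
  · simpa only [norm_Dmat, norm_norm] using norm_le_two_mul_Dmat (M x)

lemma Dmat_pos {M : Matrix (Fin n) (Fin n) ℤ} (hM : M ≠ 0) : 0 < Dmat M := by
  have : (0 : ℝ) < 2 * Dmat M := (norm_pos_iff.2 hM).trans_le (norm_le_two_mul_Dmat M)
  exact_mod_cast pos_of_mul_pos_right this zero_le_two

lemma specRad_le_iff {A : Matrix (Fin n) (Fin n) ℤ} {c : ℝ} :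
    specRad A ≤ c ↔ 0 ≤ c ∧ ∀ z ∈ spectrum ℂ (A.map (Int.cast : ℤ → ℂ)), ‖z‖ ≤ c := by
  simp only [specRad, multisetFold_max_le_iff, Multiset.forall_mem_map_iff,
    Polynomial.mem_roots (charpoly_monic _).ne_zero, mem_spectrum_iff_isRoot_charpoly]

lemma specRad_nonneg (A : Matrix (Fin n) (Fin n) ℤ) : 0 ≤ specRad A :=
  (specRad_le_iff.1 le_rfl).1

lemma spectralRadius_map_intCast (A : Matrix (Fin n) (Fin n) ℤ) :
    spectralRadius ℂ (A.map (Int.cast : ℤ → ℂ)) = ENNReal.ofReal (specRad A) := by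
  refine eq_of_forall_ge_iff fun c => ?_
  induction c with
  | top => simp
  | coe c =>
    simp only [spectralRadius, iSup_le_iff, ENNReal.coe_le_coe, ← NNReal.coe_le_coe, coe_nnnorm,
      ENNReal.ofReal_le_coe, specRad_le_iff, NNReal.coe_nonneg, true_and]

lemma tendsto_norm_pow_rpow_specRad (A : Matrix (Fin n) (Fin n) ℤ) :
    Tendsto (fun N : ℕ => ‖A ^ N‖ ^ (1 / N : ℝ)) atTop (𝓝 (specRad A)) := by
  have norm_map_pow (N : ℕ) : ‖A.map (Int.cast : ℤ → ℂ) ^ N‖ = ‖A ^ N‖ := by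
    rw [← linfty_opNorm_map_eq (A ^ N) (f := (Int.cast : ℤ → ℂ)) Complex.norm_intCast]
    exact congrArg norm (map_pow (Int.castRingHom ℂ).mapMatrix A N).symm
  have : CompleteSpace (Matrix (Fin n) (Fin n) ℂ) := FiniteDimensional.complete ℂ _
  have gelfand := spectrum.pow_norm_pow_one_div_tendsto_nhds_spectralRadius
    (A.map (Int.cast : ℤ → ℂ))
  rw [spectralRadius_map_intCast] at gelfand
  simpa only [norm_map_pow, Function.comp_def, ENNReal.toReal_ofReal (specRad_nonneg A),
    ENNReal.toReal_ofReal (Real.rpow_nonneg (norm_nonneg _) _)]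
    using (ENNReal.tendsto_toReal ENNReal.ofReal_ne_top).comp gelfand

lemma tendsto_Dmat_pow_rpow_specRad (A : Matrix (Fin n) (Fin n) ℤ) :
    Tendsto (fun N : ℕ => (Dmat (A ^ N) : ℝ) ^ (1 / N : ℝ)) atTop (𝓝 (specRad A)) :=
  tendsto_rpow_one_div_nat_of_isTheta (fun N => mod_cast Dmat_nonneg (A ^ N))
    (fun N => norm_nonneg (A ^ N)) (Dmat_isTheta_norm atTop fun N => A ^ N)
    (tendsto_norm_pow_rpow_specRad A)

lemma one_le_Dmat_pow {A : Matrix (Fin n) (Fin n) ℤ} (hA : ¬IsNilpotent A) (N : ℕ) :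
    (1 : ℝ) ≤ Dmat (A ^ N) :=
  mod_cast Dmat_pos fun hN => hA ⟨N, hN⟩

lemma one_le_specRad {A : Matrix (Fin n) (Fin n) ℤ} (hA : ¬IsNilpotent A) : 1 ≤ specRad A :=
  ge_of_tendsto' (tendsto_Dmat_pow_rpow_specRad A) fun N =>
    Real.one_le_rpow (one_le_Dmat_pow hA N) (by positivity)

theorem algebraicEntropy_eq_log_specRad_general {A : Matrix (Fin n) (Fin n) ℤ}
    (hA : ¬IsNilpotent A) :
    Tendsto (fun N : ℕ => (1 / (N : ℝ)) * Real.log (Dmat (A ^ N) : ℝ))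
      atTop (𝓝 (Real.log (specRad A))) := by
  have specRad_ne_zero : specRad A ≠ 0 := (zero_lt_one.trans_le (one_le_specRad hA)).ne'
  refine ((tendsto_Dmat_pow_rpow_specRad A).log specRad_ne_zero).congr fun N => ?_
  exact Real.log_rpow (zero_lt_one.trans_le (one_le_Dmat_pow hA N)) _

end IntegerMatrix

/-- The algebraic entropy of the monomial map associated with a nonsingular integer
matrix `A` equals the logarithm of the spectral radius of `A`. -/
theorem algebraicEntropy_eq_log_specRad {n : ℕ} (hn : 1 ≤ n)
    (A : Matrix (Fin n) (Fin n) ℤ) (hA : A.det ≠ 0) :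
    Tendsto (fun N : ℕ => (1 / (N : ℝ)) * Real.log ((Dmat (A ^ N) : ℝ)))
      atTop (nhds (Real.log (specRad A))) := by
  have : Nonempty (Fin n) := ⟨⟨0, hn⟩⟩
  exact algebraicEntropy_eq_log_specRad_general (not_isNilpotent_of_det_ne_zero hA)
end

section
/- Let A be the 3×3 integer matrix with rows (−1,1,0), (−1,0,1), (1,0,0). For every arithmetic progression, i.e., for all integers a ≥ 1 and b ≥ 0, there are infinitely many N with N ≡ b (mod a) such that the (1,1) entry of A^N is strictly positive. -/
open Matrix

/-!
The characteristic polynomial `X³ + X² + X - 1` has a real root `α ∈ (0, 1)` and a pair of nonreal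
roots `β, β̄` with `|β| > 1`, so the entry is `s N = Re (c β ^ N) + d α ^ N` with `c ≠ 0`.

No power `β ^ n`, `n ≥ 1`, is real: `ℚ(β)` has prime degree over `ℚ` and is not contained in `ℝ`,
so a real power of `β` would be rational, hence equal to its conjugate `α ^ n`, against
`|α| < |β|`.

Along a progression of difference `a`, divide by `|β| ^ N`: this leaves `Re (w ζ ^ k)` plus a
summable error, with `ζ` nonreal on the unit circle. The partial sums are bounded because `ζ ≠ 1`,
so if no term were positive the series would converge and `Re (w ζ ^ k)` would tend to `0`. For
nonreal `ζ`, two consecutive real parts determine `w ζ ^ k`, which has constant modulus.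
-/

open Filter Finset Polynomial Topology
open scoped ComplexConjugate IntermediateField

section RotatingSequences

variable {c γ ζ : ℂ}

lemma not_tendsto_re_mul_pow_zero (hζ : ‖ζ‖ = 1) (hζim : ζ.im ≠ 0) (hc : c ≠ 0) :
    ¬ Tendsto (fun k : ℕ ↦ (c * ζ ^ k).re) atTop (𝓝 0) := by
  intro hre
  have im_eq (k : ℕ) : (c * ζ ^ k).im =
      (ζ.re * (c * ζ ^ k).re - (c * ζ ^ (k + 1)).re) / ζ.im := by
    rw [pow_succ, ← mul_assoc, Complex.mul_re (c * ζ ^ k) ζ]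
    field_simp
    ring
  have him : Tendsto (fun k : ℕ ↦ (c * ζ ^ k).im) atTop (𝓝 0) := by
    simp only [im_eq]
    simpa using
      ((hre.const_mul ζ.re).sub (hre.comp (tendsto_add_atTop_nat 1))).div_const ζ.im
  have hnorm_le (k : ℕ) : ‖c‖ ≤ |(c * ζ ^ k).re| + |(c * ζ ^ k).im| := by
    simpa only [norm_mul, norm_pow, hζ, one_pow, mul_one] using
      Complex.norm_le_abs_re_add_abs_im (c * ζ ^ k)
  have hle : ‖c‖ ≤ 0 :=
    ge_of_tendsto' (by simpa using hre.abs.add him.abs) hnorm_le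
  exact hc (norm_le_zero_iff.1 hle)

lemma norm_geom_sum_le_of_norm_eq_one (hζ : ‖ζ‖ = 1) (hζ1 : ζ ≠ 1) (n : ℕ) :
    ‖∑ k ∈ range n, ζ ^ k‖ ≤ 2 / ‖ζ - 1‖ := by
  rw [geom_sum_eq hζ1, norm_div]
  gcongr
  calc ‖ζ ^ n - 1‖ ≤ ‖ζ ^ n‖ + ‖(1 : ℂ)‖ := norm_sub_le _ _
    _ = 2 := by rw [norm_pow, hζ, one_pow, norm_one, one_add_one_eq_two]

lemma exists_pos_re_mul_pow_add_of_summable (hζ : ‖ζ‖ = 1) (hζim : ζ.im ≠ 0) (hc : c ≠ 0)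
    {ε : ℕ → ℝ} (hε : Summable ε) : ∃ k, 0 < (c * ζ ^ k).re + ε k := by
  by_contra! hnonpos
  have hζ1 : ζ ≠ 1 := by rintro rfl; exact hζim Complex.one_im
  have hre_sum (n : ℕ) : -∑ k ∈ range n, (c * ζ ^ k).re ≤ ‖c‖ * (2 / ‖ζ - 1‖) :=
    calc -∑ k ∈ range n, (c * ζ ^ k).re = (-(c * ∑ k ∈ range n, ζ ^ k)).re := by
          rw [mul_sum, Complex.neg_re, Complex.re_sum]
      _ ≤ ‖c * ∑ k ∈ range n, ζ ^ k‖ := (Complex.re_le_norm _).trans_eq (norm_neg _)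
      _ ≤ ‖c‖ * (2 / ‖ζ - 1‖) := by
          rw [norm_mul]
          gcongr
          exact norm_geom_sum_le_of_norm_eq_one hζ hζ1 n
  have hε_sum (n : ℕ) : -∑ k ∈ range n, ε k ≤ ∑' k, |ε k| :=
    calc -∑ k ∈ range n, ε k ≤ |∑ k ∈ range n, ε k| := neg_le_abs _
      _ ≤ ∑ k ∈ range n, |ε k| := abs_sum_le_sum_abs _ _
      _ ≤ ∑' k, |ε k| := hε.abs.sum_le_tsum _ fun k _ ↦ abs_nonneg (ε k)
  have hsummable : Summable fun k ↦ -((c * ζ ^ k).re + ε k) :=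
    summable_of_sum_range_le (fun k ↦ neg_nonneg.2 (hnonpos k)) fun n ↦ by
      rw [sum_neg_distrib, sum_add_distrib, neg_add]
      exact add_le_add (hre_sum n) (hε_sum n)
  refine not_tendsto_re_mul_pow_zero hζ hζim hc ?_
  simpa using (hsummable.add hε).neg.tendsto_atTop_zero

lemma exists_pos_re_mul_pow_add (hγim : γ.im ≠ 0) (hc : c ≠ 0) {δ : ℝ} (hδ : |δ| < ‖γ‖)
    (d : ℝ) : ∃ k : ℕ, 0 < (c * γ ^ k).re + d * δ ^ k := by
  have hγ : 0 < ‖γ‖ := (abs_nonneg δ).trans_lt hδ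
  have hζ : ‖γ / (‖γ‖ : ℂ)‖ = 1 := by simp [hγ.ne']
  have hζim : (γ / (‖γ‖ : ℂ)).im ≠ 0 := by
    rw [Complex.div_ofReal_im]
    exact div_ne_zero hγim hγ.ne'
  have hratio : |δ / ‖γ‖| < 1 := by rwa [abs_div, abs_norm, div_lt_one hγ]
  obtain ⟨k, hk⟩ := exists_pos_re_mul_pow_add_of_summable hζ hζim hc
    ((summable_geometric_of_abs_lt_one hratio).mul_left d)
  have hscale : (c * (γ / (‖γ‖ : ℂ)) ^ k).re + d * (δ / ‖γ‖) ^ k =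
      ((c * γ ^ k).re + d * δ ^ k) / ‖γ‖ ^ k := by
    rw [div_pow, div_pow, ← mul_div_assoc, ← mul_div_assoc, ← Complex.ofReal_pow,
      Complex.div_ofReal_re, add_div]
  rw [hscale] at hk
  exact ⟨k, (div_pos_iff_of_pos_right (pow_pos hγ k)).1 hk⟩

end RotatingSequences

section RealPowers

lemma mem_bot_of_mem_of_finrank_adjoin_prime {K L : Type*} [Field K] [Field L] [Algebra K L]
    {F : IntermediateField K L} {x y : L} (hprime : (Module.finrank K K⟮x⟯).Prime) (hx : x ∉ F)
    (hyx : y ∈ K⟮x⟯) (hyF : y ∈ F) : y ∈ (⊥ : IntermediateField K L) := by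
  have : FiniteDimensional K K⟮x⟯ := Module.finite_of_finrank_pos hprime.pos
  have hle : K⟮x⟯ ⊓ F ≤ K⟮x⟯ := inf_le_left
  have hbot : K⟮x⟯ ⊓ F = ⊥ := by
    rcases hprime.eq_one_or_self_of_dvd _ (IntermediateField.finrank_dvd_of_le_right hle)
      with hone | hfull
    · exact IntermediateField.finrank_eq_one_iff.1 hone
    · have heq := IntermediateField.eq_of_le_of_finrank_eq hle hfull
      exact absurd (inf_eq_left.1 heq (IntermediateField.mem_adjoin_simple_self K x)) hx
  exact hbot ▸ IntermediateField.mem_inf.2 ⟨hyx, hyF⟩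

lemma pow_eq_algebraMap_of_isConjRoot {K L : Type*} [Field K] [Field L] [Algebra K L] {x y : L}
    (hxy : IsConjRoot K x y) {n : ℕ} {q : K} (hx : x ^ n = algebraMap K L q) :
    y ^ n = algebraMap K L q := by
  have hdvd : minpoly K y ∣ X ^ n - C q :=
    hxy ▸ minpoly.dvd K x (by simp [hx])
  simpa [sub_eq_zero] using aeval_eq_zero_of_dvd_aeval_eq_zero hdvd (minpoly.aeval K y)

lemma im_pow_ne_zero_of_isConjRoot {α β : ℂ} (hprime : (minpoly ℚ β).natDegree.Prime)
    (hβ : β.im ≠ 0) (hconj : IsConjRoot ℚ β α) (hnorm : ‖α‖ ≠ ‖β‖) {n : ℕ} (hn : n ≠ 0) :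
    (β ^ n).im ≠ 0 := by
  intro him
  let R : IntermediateField ℚ ℂ := (Complex.ofRealAm.restrictScalars ℚ).fieldRange
  have mem_R {z : ℂ} : z ∈ R ↔ z.im = 0 :=
    ⟨by rintro ⟨x, rfl⟩; exact Complex.ofReal_im x, fun hz ↦ ⟨z.re, Complex.ext rfl hz.symm⟩⟩
  have hintegral : IsIntegral ℚ β := by
    by_contra h
    simp [minpoly.eq_zero h, Nat.not_prime_zero] at hprime
  rw [← IntermediateField.adjoin.finrank hintegral] at hprime
  obtain ⟨q, hq⟩ := IntermediateField.mem_bot.1 <|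
    mem_bot_of_mem_of_finrank_adjoin_prime hprime (mt mem_R.1 hβ)
      (pow_mem (IntermediateField.mem_adjoin_simple_self ℚ β) n) (mem_R.2 him)
  have hpow : α ^ n = β ^ n := (pow_eq_algebraMap_of_isConjRoot hconj hq.symm).trans hq
  apply hnorm
  rw [← pow_left_inj₀ (norm_nonneg α) (norm_nonneg β) hn, ← norm_pow, ← norm_pow, hpow]

end RealPowers

section CubicRecurrence

-- These initial values make `s n` the complete homogeneous symmetric polynomial `hₙ(x, y, z)`.
lemma eq_sum_pow_div_of_cubic_recurrence {K : Type*} [Field K] {x y z e₁ e₂ e₃ : K}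
    (hxy : x ≠ y) (hxz : x ≠ z) (hyz : y ≠ z) (he₁ : x + y + z = e₁)
    (he₂ : x * y + x * z + y * z = e₂) (he₃ : x * y * z = e₃) {s : ℕ → K} (h0 : s 0 = 1)
    (h1 : s 1 = e₁) (h2 : s 2 = e₁ ^ 2 - e₂)
    (hs : ∀ n, s (n + 3) = e₁ * s (n + 2) - e₂ * s (n + 1) + e₃ * s n) (n : ℕ) :
    s n = x ^ (n + 2) / ((x - y) * (x - z)) - y ^ (n + 2) / ((x - y) * (y - z)) +
      z ^ (n + 2) / ((x - z) * (y - z)) := by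
  subst he₁ he₂ he₃
  have hxy' : x - y ≠ 0 := sub_ne_zero.2 hxy
  have hxz' : x - z ≠ 0 := sub_ne_zero.2 hxz
  have hyz' : y - z ≠ 0 := sub_ne_zero.2 hyz
  induction n using Nat.strong_induction_on with
  | _ n ih =>
    match n, ih with
    | 0, _ => rw [h0]; field_simp; ring
    | 1, _ => rw [h1]; field_simp; ring
    | 2, _ => rw [h2]; field_simp; ring
    | n + 3, ih =>
      rw [hs, ih (n + 2) (by lia), ih (n + 1) (by lia), ih n (by lia)]
      ring

lemma exists_eq_re_mul_pow_add_of_cubic_recurrence {α e₁ e₂ e₃ : ℝ} {β : ℂ} (hβ : β.im ≠ 0)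
    (he₁ : β + conj β + α = e₁) (he₂ : β * conj β + β * α + conj β * α = e₂)
    (he₃ : β * conj β * α = e₃) {s : ℕ → ℝ} (h0 : s 0 = 1) (h1 : s 1 = e₁)
    (h2 : s 2 = e₁ ^ 2 - e₂)
    (hs : ∀ n, s (n + 3) = e₁ * s (n + 2) - e₂ * s (n + 1) + e₃ * s n) :
    ∃ c : ℂ, c ≠ 0 ∧ ∃ d : ℝ, ∀ n, s n = (c * β ^ n).re + d * α ^ n := by
  have hβ0 : β ≠ 0 := by rintro rfl; exact hβ Complex.zero_im
  have hββ : β ≠ conj β := fun h ↦ hβ (Complex.conj_eq_iff_im.1 h.symm)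
  have hβα : β ≠ α := by rintro rfl; exact hβ (Complex.ofReal_im α)
  have hβα' : conj β ≠ α := by simpa using (starRingEnd ℂ).injective.ne hβα
  set c : ℂ := β ^ 2 / ((β - conj β) * (β - α)) with hc
  have hc0 : c ≠ 0 := div_ne_zero (pow_ne_zero 2 hβ0)
    (mul_ne_zero (sub_ne_zero.2 hββ) (sub_ne_zero.2 hβα))
  refine ⟨2 * c, mul_ne_zero two_ne_zero hc0, α ^ 2 / Complex.normSq (β - α), fun n ↦ ?_⟩
  have hclosed := eq_sum_pow_div_of_cubic_recurrence hββ hβα hβα' he₁ he₂ he₃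
    (s := fun n ↦ (s n : ℂ)) (mod_cast h0) (mod_cast h1) (mod_cast h2) (fun n ↦ mod_cast hs n) n
  have hconj : conj (c * β ^ n) =
      -(conj β ^ (n + 2) / ((β - conj β) * (conj β - α))) := by
    simp only [hc, map_mul, map_div₀, map_pow, map_sub, Complex.conj_conj, Complex.conj_ofReal]
    rw [← neg_sub β (conj β), neg_mul, div_neg]
    ring
  have hnormSq : (Complex.normSq (β - α) : ℂ) = (β - α) * (conj β - α) := by
    rw [← Complex.mul_conj, map_sub, Complex.conj_ofReal]
  have hreal : (s n : ℂ) =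
      ((2 * (c * β ^ n).re + α ^ 2 / Complex.normSq (β - α) * α ^ n : ℝ) : ℂ) := by
    rw [hclosed, Complex.ofReal_add, ← Complex.add_conj, hconj]
    push_cast
    rw [hnormSq, hc]
    ring
  rw [mul_assoc, ← Complex.ofReal_ofNat, Complex.re_ofReal_mul]
  exact Complex.ofReal_injective hreal

end CubicRecurrence

section Roots

lemma irreducible_X_cube_add_X_sq_add_X_sub_one : Irreducible (X ^ 3 + X ^ 2 + X - 1 : ℚ[X]) := by
  have hmonic : (X ^ 3 + X ^ 2 + X - 1 : ℤ[X]).Monic := by monicity!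
  have hdeg : (X ^ 3 + X ^ 2 + X - 1 : ℤ[X]).natDegree = 3 := by compute_degree!
  have hroots : (X ^ 3 + X ^ 2 + X - 1 : ℤ[X]).roots = 0 := by
    refine Multiset.eq_zero_of_forall_notMem fun k hk ↦ ?_
    have hk0 : k ^ 3 + k ^ 2 + k - 1 = 0 := by simpa using isRoot_of_mem_roots hk
    have hunit : k ∣ 1 := ⟨k ^ 2 + k + 1, by linear_combination -hk0⟩
    rcases Int.isUnit_iff.1 (isUnit_of_dvd_one hunit) with rfl | rfl <;> norm_num at hk0
  have hirr := (hmonic.irreducible_iff_roots_eq_zero_of_degree_le_three (by lia) (by lia)).2 hroots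
  simpa using (hmonic.irreducible_iff_irreducible_map_fraction_map (K := ℚ)).1 hirr

lemma minpoly_eq_X_cube_add_X_sq_add_X_sub_one {x : ℂ} (hx : x ^ 3 + x ^ 2 + x - 1 = 0) :
    minpoly ℚ x = X ^ 3 + X ^ 2 + X - 1 :=
  (minpoly.eq_of_irreducible_of_monic irreducible_X_cube_add_X_sq_add_X_sub_one
    (by simpa using hx) (by monicity!)).symm

lemma exists_mem_Ioo_cube_add_sq_add_self_sub_one_eq_zero :
    ∃ α ∈ Set.Ioo (0 : ℝ) 1, α ^ 3 + α ^ 2 + α - 1 = 0 :=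
  intermediate_value_Ioo zero_le_one (by fun_prop) (by norm_num)

lemma exists_re_normSq_eq_of_sq_lt {p q : ℝ} (h : p ^ 2 < q) :
    ∃ β : ℂ, β.im ≠ 0 ∧ β.re = p ∧ Complex.normSq β = q := by
  have hpos : 0 < q - p ^ 2 := sub_pos.2 h
  refine ⟨⟨p, √(q - p ^ 2)⟩, (Real.sqrt_pos.2 hpos).ne', rfl, ?_⟩
  rw [Complex.normSq_mk, Real.mul_self_sqrt hpos.le]
  ring

lemma exists_roots_X_cube_add_X_sq_add_X_sub_one :
    ∃ (α : ℝ) (β : ℂ), β.im ≠ 0 ∧ |α| < ‖β‖ ∧ β + conj β + α = -1 ∧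
      β * conj β + β * α + conj β * α = 1 ∧ β * conj β * α = 1 := by
  obtain ⟨α, ⟨hα0, -⟩, hα⟩ := exists_mem_Ioo_cube_add_sq_add_self_sub_one_eq_zero
  obtain ⟨β, hβ, hre, hnormSq⟩ :=
    exists_re_normSq_eq_of_sq_lt (p := -(1 + α) / 2) (q := α ^ 2 + α + 1) (by nlinarith)
  have hlt : |α| < ‖β‖ := by
    rw [abs_of_pos hα0]
    refine lt_of_pow_lt_pow_left₀ 2 (norm_nonneg β) ?_
    rw [Complex.sq_norm, hnormSq]
    linarith
  have hsum : β + conj β = -(1 + α) := by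
    rw [Complex.add_conj, hre]
    push_cast
    ring
  have hprod : β * conj β = α ^ 2 + α + 1 := by
    rw [Complex.mul_conj, hnormSq]
    push_cast
    rfl
  have hα' : (α : ℂ) ^ 3 + α ^ 2 + α - 1 = 0 := mod_cast hα
  exact ⟨α, β, hβ, hlt, by linear_combination hsum, by linear_combination hprod + α * hsum,
    by linear_combination α * hprod + hα'⟩

lemma im_pow_ne_zero_of_roots_X_cube_add_X_sq_add_X_sub_one {α β : ℂ}
    (hα : α ^ 3 + α ^ 2 + α - 1 = 0) (hβ : β ^ 3 + β ^ 2 + β - 1 = 0)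
    (hβim : β.im ≠ 0) (hnorm : ‖α‖ ≠ ‖β‖) {n : ℕ} (hn : n ≠ 0) :
    (β ^ n).im ≠ 0 := by
  have hconj : IsConjRoot ℚ β α :=
    (minpoly_eq_X_cube_add_X_sq_add_X_sub_one hβ).trans
      (minpoly_eq_X_cube_add_X_sq_add_X_sub_one hα).symm
  have hdeg : (minpoly ℚ β).natDegree = 3 := by
    rw [minpoly_eq_X_cube_add_X_sq_add_X_sub_one hβ]
    compute_degree!
  exact im_pow_ne_zero_of_isConjRoot (hdeg ▸ Nat.prime_three) hβim hconj hnorm hn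

end Roots

section MonomialMap

/-- The exponent matrix of the monomial map `(x, y, z) ↦ (y/x, z/x, x)`, one row per coordinate. -/
def monomialMatrix : Matrix (Fin 3) (Fin 3) ℤ :=
  !![-1, 1, 0; -1, 0, 1; 1, 0, 0]

lemma monomialMatrix_pow_add_three (n : ℕ) :
    monomialMatrix ^ (n + 3) =
      -monomialMatrix ^ (n + 2) - monomialMatrix ^ (n + 1) + monomialMatrix ^ n := by
  have hcube : monomialMatrix ^ 3 = -monomialMatrix ^ 2 - monomialMatrix + 1 := by decide
  rw [pow_add _ n 3, hcube, pow_add _ n 2, pow_succ _ n]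
  noncomm_ring

lemma exists_pos_monomialMatrix_pow_apply {a : ℕ} (ha : a ≠ 0) (b : ℕ) :
    ∃ k, 0 < (monomialMatrix ^ (a * k + b)) 0 0 := by
  obtain ⟨α, β, hβ, hαβ, hsum, hpairs, hprod⟩ := exists_roots_X_cube_add_X_sq_add_X_sub_one
  have hα_root : (α : ℂ) ^ 3 + α ^ 2 + α - 1 = 0 := by
    linear_combination (α : ℂ) ^ 2 * hsum - α * hpairs + hprod
  have hβ_root : β ^ 3 + β ^ 2 + β - 1 = 0 := by
    linear_combination β ^ 2 * hsum - β * hpairs + hprod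
  have hnorm : ‖(α : ℂ)‖ ≠ ‖β‖ := by simpa using hαβ.ne
  obtain ⟨c, hc, d, hclosed⟩ := exists_eq_re_mul_pow_add_of_cubic_recurrence
    (s := fun n ↦ ((monomialMatrix ^ n) 0 0 : ℝ)) (e₁ := -1) (e₂ := 1) (e₃ := 1) hβ
    (by simpa using hsum) (by simpa using hpairs) (by simpa using hprod)
    (by simp) (by simp [monomialMatrix]) (by simp [monomialMatrix, sq])
    (fun n ↦ by simp [monomialMatrix_pow_add_three])
  have hcβ : c * β ^ b ≠ 0 :=
    mul_ne_zero hc (pow_ne_zero b (by rintro rfl; exact hβ Complex.zero_im))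
  have hαβa : |α ^ a| < ‖β ^ a‖ := by
    rw [abs_pow, norm_pow]
    exact pow_lt_pow_left₀ hαβ (abs_nonneg α) ha
  have hβa : (β ^ a).im ≠ 0 :=
    im_pow_ne_zero_of_roots_X_cube_add_X_sq_add_X_sub_one hα_root hβ_root hβ hnorm ha
  obtain ⟨k, hk⟩ := exists_pos_re_mul_pow_add hβa hcβ hαβa (d * α ^ b)
  have hentry : ((monomialMatrix ^ (a * k + b)) 0 0 : ℝ) =
      (c * β ^ b * (β ^ a) ^ k).re + d * α ^ b * (α ^ a) ^ k := by
    rw [hclosed, add_comm (a * k), pow_add, pow_add, pow_mul, pow_mul, ← mul_assoc, ← mul_assoc]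
  exact ⟨k, by exact_mod_cast hentry ▸ hk⟩

end MonomialMap

/-- Along every arithmetic progression there are infinitely many `N` with the
`(1,1)` entry of `A^N` strictly positive, where `A` is the matrix of the monomial
map `(x,y,z) ↦ (y/x, z/x, x)`. -/
theorem entry_pos_infinitely_often (a : ℕ) (ha : 1 ≤ a) (b : ℕ) :
    ∀ M : ℕ, ∃ N : ℕ, M ≤ N ∧ N % a = b % a ∧
      0 < (((!![-1, 1, 0; -1, 0, 1; 1, 0, 0] : Matrix (Fin 3) (Fin 3) ℤ) ^ N) 0 0) := by
  intro M
  obtain ⟨k, hk⟩ := exists_pos_monomialMatrix_pow_apply (Nat.one_le_iff_ne_zero.1 ha) (a * M + b)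
  have hM : M ≤ a * M := Nat.le_mul_of_pos_left M ha
  exact ⟨a * k + (a * M + b), by lia, by simp, hk⟩
end
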